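/- Let z ∈ ℂ with Re(z) > 0. Then ψ₁(z) − (1/2) log²(z) = −log(z)/z + ∫_0^∞ ( 1/(e^{t} − 1) − 1/t ) e^{−zt} ( γ + log(t) ) dt. -/

import Mathlib

open Filter Topology MeasureTheory

noncomputable def eulerGamma : ℝ := Real.eulerMascheroniConstant

noncomputable def gamma1 : ℝ :=
  limUnder atTop (fun n : ℕ => ∑ j ∈ Finset.Icc 1 n, Real.log j / j - (Real.log n) ^ 2 / 2)

noncomputable def psi1 (z : ℂ) : ℂ :=
  -(gamma1 : ℂ) - Complex.log z / z -
    ∑' n : ℕ, (Complex.log (((n : ℂ) + 1) + z) / (((n : ℂ) + 1) + z)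
      - Complex.log ((n : ℂ) + 1) / ((n : ℂ) + 1))

/-!
The Laplace transform of `γ + log t` at `w` is `-log w / w`. Integrating this over
`w ∈ [z, z + 1]` shows that the transform of `(1 - e^{-t}) / t * (γ + log t)` is
`(log² z - log² (z + 1)) / 2`. Let `F z` be the transform of `K t * (γ + log t)`, where
`K t = 1 / (e^t - 1) - 1 / t`. Since `(1 - e^{-t}) * K t = e^{-t} - (1 - e^{-t}) / t`, the function
`G z = F z + log² z / 2` satisfies `G (z + 1) - G z = log (z + 1) / (z + 1)`, and `F (z + N) → 0`.
Telescoping gives `∑_{k = 1}^N log (k + z) / (k + z) - log² (z + N) / 2 → -G z`. Comparing with the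
limit defining `γ₁` evaluates the series in `psi1 z` as `-G z - γ₁`.
-/

open Set

section LaplaceTransform

variable {E : Type*} [NormedAddCommGroup E] [NormedSpace ℂ E] {f : ℝ → E} {w w' : ℂ}

/-- The Laplace transform `∫₀^∞ e^{-wt} f(t) dt` of a function on the half-line, as a Bochner
integral; the values of `f` outside `(0, ∞)` play no role. -/
noncomputable def laplaceTransform (f : ℝ → E) (w : ℂ) : E :=
  ∫ t in Ioi (0 : ℝ), Complex.exp (-w * t) • f t

/-- Absolute convergence of the integral defining `laplaceTransform f w`. -/
def LaplaceConvergent (f : ℝ → E) (w : ℂ) : Prop :=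
  IntegrableOn (fun t : ℝ ↦ Complex.exp (-w * t) • f t) (Ioi 0)

lemma mul_exp_neg_mul_le_inv {δ : ℝ} (hδ : 0 < δ) (t : ℝ) : t * Real.exp (-(δ * t)) ≤ δ⁻¹ := by
  have h : δ * t * Real.exp (-(δ * t)) ≤ 1 :=
    (Real.mul_exp_neg_le_exp_neg_one (δ * t)).trans (Real.exp_le_one_iff.2 (by norm_num))
  rw [← one_div, le_div_iff₀ hδ]
  linarith

lemma norm_exp_neg_mul_ofReal (w : ℂ) (t : ℝ) :
    ‖Complex.exp (-w * t)‖ = Real.exp (-(w.re * t)) := by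
  simp [Complex.norm_exp]

lemma norm_exp_neg_mul_smul_le (hw : w.re ≤ w'.re) {t : ℝ} (ht : 0 ≤ t) (v : E) :
    ‖Complex.exp (-w' * t) • v‖ ≤ ‖Complex.exp (-w * t) • v‖ := by
  simp only [norm_smul, norm_exp_neg_mul_ofReal]
  gcongr

lemma aestronglyMeasurable_exp_neg_mul_smul_iff {μ : Measure ℝ} :
    AEStronglyMeasurable (fun t : ℝ ↦ Complex.exp (-w * t) • f t) μ ↔
      AEStronglyMeasurable f μ := by
  refine ⟨fun h ↦ ?_, fun h ↦ (by fun_prop : Continuous fun t : ℝ ↦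
    Complex.exp (-w * t)).aestronglyMeasurable.smul h⟩
  have hexp : Continuous fun t : ℝ ↦ Complex.exp (w * t) := by fun_prop
  refine (hexp.aestronglyMeasurable.smul h).congr (.of_forall fun t ↦ ?_)
  simp [smul_smul, ← Complex.exp_add]

namespace LaplaceConvergent

lemma mono_re (hf : LaplaceConvergent f w) (hw : w.re ≤ w'.re) : LaplaceConvergent f w' := by
  refine Integrable.mono hf (aestronglyMeasurable_exp_neg_mul_smul_iff.2
    (aestronglyMeasurable_exp_neg_mul_smul_iff.1 hf.aestronglyMeasurable)) ?_
  filter_upwards [ae_restrict_mem measurableSet_Ioi] with t ht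
  exact norm_exp_neg_mul_smul_le hw (le_of_lt ht) _

lemma bdd_smul (hf : LaplaceConvergent f w) {k : ℝ → ℂ} (hk : Measurable k) {C : ℝ}
    (hkC : ∀ t > 0, ‖k t‖ ≤ C) : LaplaceConvergent (fun t ↦ k t • f t) w := by
  refine (Integrable.bdd_smul hf C hk.aestronglyMeasurable ?_).congr (.of_forall fun t ↦ ?_)
  · filter_upwards [ae_restrict_mem measurableSet_Ioi] with t ht using hkC t ht
  · exact smul_comm (k t) _ (f t)

lemma tendsto_laplaceTransform_zero (hf : LaplaceConvergent f w) :
    Tendsto (laplaceTransform f) (comap Complex.re atTop) (𝓝 0) := by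
  have hre : Tendsto Complex.re (comap Complex.re atTop) atTop := tendsto_comap
  have hlim : Tendsto (laplaceTransform f) (comap Complex.re atTop)
      (𝓝 (∫ _ in Ioi (0 : ℝ), (0 : E))) := by
    refine tendsto_integral_filter_of_dominated_convergence _ ?_ ?_ hf.norm ?_
    · exact .of_forall fun _ ↦ aestronglyMeasurable_exp_neg_mul_smul_iff.2
        (aestronglyMeasurable_exp_neg_mul_smul_iff.1 hf.aestronglyMeasurable)
    · filter_upwards [hre.eventually_ge_atTop w.re] with w' hw'
      filter_upwards [ae_restrict_mem measurableSet_Ioi] with t ht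
      exact norm_exp_neg_mul_smul_le hw' (le_of_lt ht) _
    · filter_upwards [ae_restrict_mem measurableSet_Ioi] with t ht
      rw [tendsto_zero_iff_norm_tendsto_zero]
      have hexp : Tendsto (fun w' : ℂ ↦ Real.exp (-(w'.re * t))) (comap Complex.re atTop) (𝓝 0) :=
        Real.tendsto_exp_neg_atTop_nhds_zero.comp (hre.atTop_mul_const ht)
      simpa only [norm_smul, norm_exp_neg_mul_ofReal, zero_mul] using hexp.mul_const ‖f t‖
  simpa using hlim

lemma differentiableAt (hf : LaplaceConvergent f w) (hw : w.re < w'.re) :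
    DifferentiableAt ℂ (laplaceTransform f) w' := by
  -- Half of the gap between the real parts absorbs the factor `t` produced by the derivative.
  obtain ⟨δ, hδ, hδw⟩ : ∃ δ > 0, w.re + δ + δ = w'.re :=
    ⟨(w'.re - w.re) / 2, by linarith, by ring⟩
  have hmeas : AEStronglyMeasurable f (volume.restrict (Ioi 0)) :=
    aestronglyMeasurable_exp_neg_mul_smul_iff.1 hf.aestronglyMeasurable
  refine (hasDerivAt_integral_of_dominated_loc_of_deriv_le
    (F := fun (v : ℂ) (t : ℝ) ↦ Complex.exp (-v * t) • f t)
    (F' := fun (v : ℂ) (t : ℝ) ↦ (Complex.exp (-v * t) * -(t : ℂ)) • f t)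
    (Metric.ball_mem_nhds w' hδ) (.of_forall fun _ ↦
      aestronglyMeasurable_exp_neg_mul_smul_iff.2 hmeas) (hf.mono_re hw.le) ?_ ?_
    (hf.norm.const_mul δ⁻¹) (.of_forall fun t v _ ↦ ?_)).2.differentiableAt
  · exact (by fun_prop : Continuous fun t : ℝ ↦
      Complex.exp (-w' * t) * -(t : ℂ)).aestronglyMeasurable.smul hmeas
  · filter_upwards [ae_restrict_mem measurableSet_Ioi] with t ht v hv
    have ht : 0 < t := ht
    have hv : w.re + δ ≤ v.re := by
      have hdist := (Complex.abs_re_le_norm (v - w')).trans_lt (mem_ball_iff_norm.1 hv)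
      rw [Complex.sub_re, abs_lt] at hdist
      linarith
    calc ‖(Complex.exp (-v * t) * -(t : ℂ)) • f t‖
        = Real.exp (-(v.re * t)) * t * ‖f t‖ := by
          rw [norm_smul, norm_mul, norm_exp_neg_mul_ofReal, norm_neg, Complex.norm_real,
            Real.norm_of_nonneg ht.le]
      _ ≤ Real.exp (-((w.re + δ) * t)) * t * ‖f t‖ := by gcongr
      _ = t * Real.exp (-(δ * t)) * (Real.exp (-(w.re * t)) * ‖f t‖) := by
          rw [add_mul, neg_add, Real.exp_add]
          ring
      _ ≤ δ⁻¹ * (Real.exp (-(w.re * t)) * ‖f t‖) := by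
          gcongr
          exact mul_exp_neg_mul_le_inv hδ t
      _ = δ⁻¹ * ‖Complex.exp (-w * t) • f t‖ := by rw [norm_smul, norm_exp_neg_mul_ofReal]
  · have hlin : HasDerivAt (fun v : ℂ ↦ -v * (t : ℂ)) (-(t : ℂ)) v := by
      simpa using (hasDerivAt_id v).neg.mul_const (t : ℂ)
    exact hlin.cexp.smul_const (f t)

lemma integral_laplaceTransform_add [CompleteSpace E] (hf : LaplaceConvergent f w) {a : ℝ}
    (ha : 0 ≤ a) :
    ∫ s in (0 : ℝ)..a, laplaceTransform f (w + s) =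
      laplaceTransform (fun t ↦ ((1 - Complex.exp (-a * t)) / t : ℂ) • f t) w := by
  have hint : Integrable (fun p : ℝ × ℝ ↦ Complex.exp (-(w + p.1) * p.2) • f p.2)
      ((volume.restrict (Ioc 0 a)).prod (volume.restrict (Ioi 0))) := by
    refine ((hf.comp_snd (volume.restrict (Ioc 0 a))).bdd_smul
      (φ := fun p : ℝ × ℝ ↦ Complex.exp (-p.1 * p.2)) 1 (by fun_prop) ?_).congr
      (.of_forall fun p ↦ ?_)
    · rw [Measure.prod_restrict]
      filter_upwards [ae_restrict_mem (measurableSet_Ioc.prod measurableSet_Ioi)] with p hp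
      rw [norm_exp_neg_mul_ofReal, Real.exp_le_one_iff]
      exact neg_nonpos.2 (mul_nonneg hp.1.1.le (le_of_lt hp.2))
    · simp only [Pi.smul_apply', smul_smul, ← Complex.exp_add]
      ring_nf
  calc ∫ s in (0 : ℝ)..a, laplaceTransform f (w + s)
      = ∫ t in Ioi (0 : ℝ), ∫ s in (0 : ℝ)..a, Complex.exp (-(w + s) * t) • f t :=
        intervalIntegral_integral_swap (by rwa [uIoc_of_le ha])
    _ = _ := setIntegral_congr_fun measurableSet_Ioi fun t ht ↦ ?_
  have ht : (-t : ℂ) ≠ 0 := neg_ne_zero.2 (Complex.ofReal_ne_zero.2 (ne_of_gt ht))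
  have hsplit (s : ℝ) : Complex.exp (-(w + s) * t) =
      Complex.exp (-w * t) * Complex.exp (-t * s) := by
    rw [← Complex.exp_add]
    ring_nf
  simp only [hsplit, intervalIntegral.integral_smul_const, intervalIntegral.integral_const_mul,
    integral_exp_mul_complex ht, smul_smul]
  congr 2
  rw [div_neg, ← neg_div]
  simp [mul_comm]

end LaplaceConvergent

end LaplaceTransform

section Logarithm

open Asymptotics

lemma integral_log_add_div_add {z : ℂ} {a : ℝ}
    (hz : ∀ s ∈ uIcc 0 a, z + s ∈ Complex.slitPlane) :
    ∫ s in (0 : ℝ)..a, Complex.log (z + s) / (z + s) =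
      (Complex.log (z + a) ^ 2 - Complex.log z ^ 2) / 2 := by
  have hderiv : ∀ s ∈ uIcc (0 : ℝ) a, HasDerivAt (fun s : ℝ ↦ Complex.log (z + s) ^ 2 / 2)
      (Complex.log (z + s) / (z + s)) s := fun s hs ↦ by
    have hadd : HasDerivAt (fun s : ℝ ↦ z + (s : ℂ)) 1 s :=
      Complex.ofRealCLM.hasDerivAt.const_add z
    refine (((hadd.clog_real (hz s hs)).pow 2).div_const 2).congr_deriv ?_
    ring
  have hcont : ContinuousOn (fun s : ℝ ↦ Complex.log (z + s) / (z + s)) (uIcc 0 a) :=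
    .div (.clog (by fun_prop) hz) (by fun_prop) fun s hs ↦ Complex.slitPlane_ne_zero (hz s hs)
  rw [intervalIntegral.integral_eq_sub_of_hasDerivAt hderiv hcont.intervalIntegrable]
  simp [sub_div]

lemma isBigO_log_add_sub_log (z : ℂ) :
    (fun x : ℝ ↦ Complex.log (z + x) - Real.log x) =O[atTop] fun x : ℝ ↦ x⁻¹ := by
  have hinv : Tendsto (fun x : ℝ ↦ 1 + z * ((x⁻¹ : ℝ) : ℂ)) atTop (𝓝 1) := by
    simpa using ((Complex.continuous_ofReal.tendsto 0).comp
      tendsto_inv_atTop_zero).const_mul z |>.const_add 1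
  have hlog : (fun x : ℝ ↦ Complex.log (1 + z * ((x⁻¹ : ℝ) : ℂ))) =O[atTop] fun x : ℝ ↦ x⁻¹ := by
    have hO := (Complex.hasDerivAt_log Complex.one_mem_slitPlane).isBigO_sub.comp_tendsto hinv
    simp only [Function.comp_def, Complex.log_one, sub_zero, add_sub_cancel_left] at hO
    exact hO.trans (.of_bound ‖z‖ (.of_forall fun x ↦ by simp))
  refine hlog.congr' ?_ .rfl
  filter_upwards [eventually_gt_atTop 0, hinv.eventually_ne one_ne_zero] with x hx hne
  have hx' : (x : ℂ) ≠ 0 := Complex.ofReal_ne_zero.2 hx.ne'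
  have hfactor : z + x = (1 + z * ((x⁻¹ : ℝ) : ℂ)) * x := by
    push_cast
    field_simp
    ring
  rw [hfactor, Complex.log_mul_ofReal x hx _ hne, add_sub_cancel_left]

lemma tendsto_log_add_sq_sub_log_sq (z : ℂ) :
    Tendsto (fun x : ℝ ↦ Complex.log (z + x) ^ 2 - (Real.log x : ℂ) ^ 2) atTop (𝓝 0) := by
  have hlog : (fun _ : ℝ ↦ (1 : ℝ)) =O[atTop] Real.log :=
    Real.isLittleO_const_log_atTop.isBigO
  have hdiff := isBigO_log_add_sub_log z
  have hsum : (fun x : ℝ ↦ Complex.log (z + x) + Real.log x) =O[atTop] Real.log := by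
    have hone : (fun x : ℝ ↦ x⁻¹) =O[atTop] fun _ ↦ (1 : ℝ) := tendsto_inv_atTop_zero.isBigO_one ℝ
    have htwo : (fun x : ℝ ↦ 2 * (Real.log x : ℂ)) =O[atTop] Real.log :=
      .of_bound 2 (.of_forall fun x ↦ by simp)
    exact ((hdiff.trans (hone.trans hlog)).add htwo).congr_left fun x ↦ by ring
  have hlim : Tendsto (fun x : ℝ ↦ x⁻¹ * Real.log x) atTop (𝓝 0) := by
    simpa [div_eq_inv_mul] using Real.isLittleO_log_id_atTop.tendsto_div_nhds_zero
  exact ((hdiff.mul hsum).trans_tendsto hlim).congr fun x ↦ by ring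

lemma isBigO_inv_add (z : ℂ) : (fun x : ℝ ↦ (z + x)⁻¹) =O[atTop] fun x : ℝ ↦ x⁻¹ := by
  have hconst : (fun _ : ℝ ↦ z) =o[atTop] fun x : ℝ ↦ (x : ℂ) :=
    Complex.isLittleO_ofReal_right.2 (isLittleO_const_id_atTop z)
  have hinv : (fun x : ℝ ↦ (z + x)⁻¹) =O[atTop] fun x : ℝ ↦ (x : ℂ)⁻¹ := by
    refine hconst.right_isBigO_add.inv_rev ?_
    filter_upwards [eventually_ne_atTop 0] with x hx hx0
    exact absurd (Complex.ofReal_eq_zero.1 hx0) hx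
  exact hinv.trans (.of_bound 1 (.of_forall fun x ↦ by simp))

lemma isBigO_log_add_div_add_sub_log_div (z : ℂ) :
    (fun x : ℝ ↦ Complex.log (z + x) / (z + x) - Real.log x / x) =O[atTop]
      fun x : ℝ ↦ x ^ (-(3 / 2) : ℝ) := by
  have hone : (fun _ : ℝ ↦ (1 : ℝ)) =O[atTop] Real.log :=
    Real.isLittleO_const_log_atTop.isBigO
  have hdiff : (fun x : ℝ ↦ Complex.log (z + x) - Real.log x) =O[atTop]
      fun x : ℝ ↦ x⁻¹ * Real.log x := by
    refine (isBigO_log_add_sub_log z).trans ?_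
    simpa using (isBigO_refl (fun x : ℝ ↦ x⁻¹) atTop).mul hone
  have hmain : (fun x : ℝ ↦ z * ((x⁻¹ * Real.log x : ℝ) : ℂ)) =O[atTop]
      fun x : ℝ ↦ x⁻¹ * Real.log x :=
    .of_bound ‖z‖ (.of_forall fun x ↦ by simp)
  have hlog : Real.log =O[atTop] fun x : ℝ ↦ x ^ (1 / 2 : ℝ) :=
    (isLittleO_log_rpow_atTop one_half_pos).isBigO
  -- With `d = log (z + x) - log x`, the difference is `(d - z * log x / x) / (z + x)`.
  refine (((hdiff.sub hmain).mul (isBigO_inv_add z)).trans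
    (((isBigO_refl _ _).mul hlog).mul (isBigO_refl _ _))).congr' ?_ ?_
  · have hne : ∀ᶠ x : ℝ in atTop, z + x ≠ 0 := by
      filter_upwards [eventually_gt_atTop (-z.re)] with x hx h0
      have hre := congrArg Complex.re h0
      simp only [Complex.add_re, Complex.ofReal_re, Complex.zero_re] at hre
      linarith
    filter_upwards [hne, eventually_ne_atTop 0] with x hzx hx
    have hx' : (x : ℂ) ≠ 0 := Complex.ofReal_ne_zero.2 hx
    push_cast
    field_simp
    ring
  · filter_upwards [eventually_gt_atTop 0] with x hx
    rw [← Real.rpow_neg_one, ← Real.rpow_add hx, ← Real.rpow_add hx]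
    norm_num

lemma summable_log_add_div_add_sub (z : ℂ) :
    Summable fun n : ℕ ↦ Complex.log (((n : ℂ) + 1) + z) / (((n : ℂ) + 1) + z) -
      Complex.log ((n : ℂ) + 1) / ((n : ℂ) + 1) := by
  have hsummable : Summable fun n : ℕ ↦
      Complex.log (z + n) / (z + n) - Complex.log n / n := by
    refine summable_of_isBigO_nat (Real.summable_nat_rpow.2 (by norm_num : -(3 / 2 : ℝ) < -1))
      (((isBigO_log_add_div_add_sub_log_div z).comp_tendsto
        tendsto_natCast_atTop_atTop).congr_left fun n ↦ ?_)
    simp [Complex.natCast_log]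
  simpa [add_comm z] using (summable_nat_add_iff 1).2 hsummable

end Logarithm

section LogLaplaceTransform

variable {w z : ℂ}

/-- The weight `γ + log t`. The constant `γ` is the one for which `laplaceTransform gammaAddLog`
vanishes at `1`. -/
noncomputable def gammaAddLog (t : ℝ) : ℂ := eulerGamma + Real.log t

lemma laplaceConvergent_const (c : ℂ) (hw : 0 < w.re) : LaplaceConvergent (fun _ ↦ c) w :=
  (integrableOn_exp_mul_complex_Ioi (a := -w) (by simpa using hw) 0).smul_const c

lemma laplaceConvergent_log (hw : 0 < w.re) :
    LaplaceConvergent (fun t ↦ (Real.log t : ℂ)) w := by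
  have hcont : Continuous fun t : ℝ ↦ Complex.exp (-w * t) := by fun_prop
  have htop : (fun t : ℝ ↦ Complex.exp (-w * t)) =O[atTop] fun t : ℝ ↦ t ^ (-2 : ℝ) := by
    refine .trans (.of_norm_le fun t ↦ ?_) (isLittleO_exp_neg_mul_rpow_atTop hw (-2)).isBigO
    rw [norm_exp_neg_mul_ofReal, neg_mul]
  have hzero : (fun t : ℝ ↦ Complex.exp (-w * t)) =O[𝓝[>] 0] fun t : ℝ ↦ t ^ (-0 : ℝ) := by
    simpa using (hcont.continuousAt.isBigO_one ℝ).mono nhdsWithin_le_nhds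
  have hmellin := (mellin_hasDerivAt_of_isBigO_rpow (s := 1)
    (hcont.locallyIntegrable.locallyIntegrableOn _) htop (by simp) hzero (by simp)).1
  refine hmellin.congr (.of_forall fun t ↦ ?_)
  simp [mul_comm]

lemma laplaceConvergent_gammaAddLog (hw : 0 < w.re) : LaplaceConvergent gammaAddLog w :=
  ((laplaceConvergent_const eulerGamma hw).add (laplaceConvergent_log hw)).congr
    (.of_forall fun _ ↦ (smul_add _ _ _).symm)

lemma laplaceTransform_const (c : ℂ) (hw : 0 < w.re) : laplaceTransform (fun _ ↦ c) w = c / w := by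
  have hexp := integral_exp_mul_complex_Ioi (a := -w) (by simpa using hw) 0
  simp only [laplaceTransform, integral_smul_const, hexp]
  simp [div_eq_inv_mul]

lemma laplaceTransform_log_one :
    laplaceTransform (fun t ↦ (Real.log t : ℂ)) 1 = -Real.eulerMascheroniConstant := by
  have hGamma : Complex.Gamma =ᶠ[𝓝 1] Complex.GammaIntegral := by
    filter_upwards [Complex.continuous_re.isOpen_preimage _ isOpen_Ioi |>.mem_nhds
      (by simp : (1 : ℂ) ∈ Complex.re ⁻¹' Ioi 0)] with s hs
    exact Complex.Gamma_eq_integral hs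
  have hderiv := ((Complex.hasDerivAt_GammaIntegral (s := 1) (by simp)).congr_of_eventuallyEq
    hGamma).unique Complex.hasDerivAt_Gamma_one
  rw [← hderiv, laplaceTransform]
  simp [mul_comm]

lemma laplaceTransform_gammaAddLog_one : laplaceTransform gammaAddLog 1 = 0 := by
  have hadd := integral_add (laplaceConvergent_const (w := 1) eulerGamma (by simp))
    (laplaceConvergent_log (w := 1) (by simp))
  calc laplaceTransform gammaAddLog 1
      = laplaceTransform (fun _ ↦ (eulerGamma : ℂ)) 1 +
          laplaceTransform (fun t ↦ (Real.log t : ℂ)) 1 := by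
        simp only [laplaceTransform, gammaAddLog, smul_add, hadd]
    _ = 0 := by
        rw [laplaceTransform_const _ (by simp), laplaceTransform_log_one]
        simp [eulerGamma]

lemma laplaceTransform_gammaAddLog_ofReal {r : ℝ} (hr : 0 < r) :
    laplaceTransform gammaAddLog r = -(Complex.log r / r) := by
  have hscale : ∀ t ∈ Ioi (0 : ℝ), Complex.exp (-r * t) • gammaAddLog t =
      Complex.exp (-1 * (r * t : ℝ)) • gammaAddLog (r * t) -
        Complex.exp (-1 * (r * t : ℝ)) • (Real.log r : ℂ) := fun t ht ↦ by
    rw [← smul_sub, gammaAddLog, gammaAddLog, Real.log_mul hr.ne' (ne_of_gt ht)]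
    push_cast
    ring_nf
  have hsub := integral_sub (laplaceConvergent_gammaAddLog (w := 1) (by simp))
    (laplaceConvergent_const (w := 1) (Real.log r : ℂ) (by simp))
  calc laplaceTransform gammaAddLog r
      = r⁻¹ • (laplaceTransform gammaAddLog 1 - laplaceTransform (fun _ ↦ (Real.log r : ℂ)) 1) := by
        rw [laplaceTransform, setIntegral_congr_fun measurableSet_Ioi hscale,
          integral_comp_mul_left_Ioi (fun u : ℝ ↦ Complex.exp (-1 * (u : ℂ)) • gammaAddLog u -
            Complex.exp (-1 * (u : ℂ)) • (Real.log r : ℂ)) 0 hr, mul_zero, hsub]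
        rfl
    _ = -(Complex.log r / r) := by
        rw [laplaceTransform_gammaAddLog_one, laplaceTransform_const _ (by simp),
          Complex.ofReal_log hr.le]
        simp [div_eq_inv_mul]

lemma eqOn_re_pos_of_forall_ofReal {E : Type*} [NormedAddCommGroup E] [NormedSpace ℂ E]
    [CompleteSpace E] {f g : ℂ → E}
    (hf : DifferentiableOn ℂ f {w | 0 < w.re}) (hg : DifferentiableOn ℂ g {w | 0 < w.re})
    (hfg : ∀ r : ℝ, 0 < r → f r = g r) : EqOn f g {w | 0 < w.re} := by
  have hopen : IsOpen {w : ℂ | 0 < w.re} := isOpen_lt continuous_const Complex.continuous_re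
  have hacc : Tendsto ((↑) : ℝ → ℂ) (𝓝[≠] 1) (𝓝[≠] 1) :=
    (Complex.ofRealCLM.hasDerivAt (x := 1)).tendsto_nhdsNE (by simp)
  have hpos : ∀ᶠ r : ℝ in 𝓝[≠] 1, 0 < r :=
    nhdsWithin_le_nhds (lt_mem_nhds one_pos)
  exact (hf.analyticOnNhd hopen).eqOn_of_preconnected_of_frequently_eq (hg.analyticOnNhd hopen)
    (convex_halfSpace_re_gt 0).isPreconnected (z₀ := 1) (by simp)
    (hacc.frequently (hpos.mono hfg).frequently)

lemma laplaceTransform_gammaAddLog (hw : 0 < w.re) :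
    laplaceTransform gammaAddLog w = -(Complex.log w / w) := by
  refine eqOn_re_pos_of_forall_ofReal (g := fun w ↦ -(Complex.log w / w)) (fun v hv ↦ ?_)
    (fun v hv ↦ ?_) (fun r ↦ laplaceTransform_gammaAddLog_ofReal) hw
  · obtain ⟨x, hx, hxv⟩ := exists_between (mem_ofPred.1 hv)
    exact ((laplaceConvergent_gammaAddLog (w := x) hx).differentiableAt
      hxv).differentiableWithinAt
  · have hv : v ∈ Complex.slitPlane := .inl hv
    exact ((differentiableAt_id.clog hv).div differentiableAt_id
      (Complex.slitPlane_ne_zero hv)).neg.differentiableWithinAt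

lemma laplaceTransform_one_sub_exp_div_smul_gammaAddLog (hz : 0 < z.re) :
    laplaceTransform (fun t ↦ ((1 - Complex.exp (-t)) / t : ℂ) • gammaAddLog t) z =
      -((Complex.log (z + 1) ^ 2 - Complex.log z ^ 2) / 2) := by
  have hre : ∀ s ∈ uIcc (0 : ℝ) 1, 0 < (z + s).re := fun s hs ↦ by
    rw [uIcc_of_le zero_le_one] at hs
    simpa using add_pos_of_pos_of_nonneg hz hs.1
  calc laplaceTransform (fun t ↦ ((1 - Complex.exp (-t)) / t : ℂ) • gammaAddLog t) z
      = ∫ s in (0 : ℝ)..1, laplaceTransform gammaAddLog (z + s) := by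
        rw [(laplaceConvergent_gammaAddLog hz).integral_laplaceTransform_add zero_le_one]
        simp
    _ = ∫ s in (0 : ℝ)..1, -(Complex.log (z + s) / (z + s)) :=
        intervalIntegral.integral_congr fun s hs ↦ laplaceTransform_gammaAddLog (hre s hs)
    _ = -((Complex.log (z + 1) ^ 2 - Complex.log z ^ 2) / 2) := by
        rw [intervalIntegral.integral_neg, integral_log_add_div_add fun s hs ↦ .inl (hre s hs),
          Complex.ofReal_one]

end LogLaplaceTransform

section BernoulliKernel

variable {z : ℂ}

/-- The kernel `1 / (e^t - 1) - 1 / t`, whose Laplace transform against `γ + log t` is the integral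
in the formula for `psi1`. -/
noncomputable def bernoulliKernel (t : ℝ) : ℂ := 1 / (Complex.exp t - 1) - 1 / t

lemma measurable_bernoulliKernel : Measurable bernoulliKernel := by
  unfold bernoulliKernel
  fun_prop

lemma norm_bernoulliKernel_le_one {t : ℝ} (ht : 0 < t) : ‖bernoulliKernel t‖ ≤ 1 := by
  have hcast : bernoulliKernel t = ((1 / (Real.exp t - 1) - 1 / t : ℝ) : ℂ) := by
    simp [bernoulliKernel]
  have hlower : t ≤ Real.exp t - 1 := by linarith [Real.add_one_le_exp t]
  have hupper : Real.exp t - 1 ≤ t * Real.exp t := by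
    have hmul := mul_le_mul_of_nonneg_right (Real.one_sub_le_exp_neg t) (Real.exp_pos t).le
    rw [← Real.exp_add, neg_add_cancel, Real.exp_zero] at hmul
    linarith
  have hpos : 0 < Real.exp t - 1 := ht.trans_le hlower
  rw [hcast, Complex.norm_real, Real.norm_eq_abs, abs_le, div_sub_div _ _ hpos.ne' ht.ne',
    le_div_iff₀ (by positivity), div_le_iff₀ (by positivity)]
  constructor <;> linarith [mul_pos hpos ht]

/-- The integral `∫₀^∞ (1 / (e^t - 1) - 1 / t) e^{-zt} (γ + log t) dt`. -/
noncomputable def bernoulliLogIntegral : ℂ → ℂ :=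
  laplaceTransform fun t ↦ bernoulliKernel t • gammaAddLog t

lemma laplaceConvergent_bernoulliKernel_smul_gammaAddLog (hz : 0 < z.re) :
    LaplaceConvergent (fun t ↦ bernoulliKernel t • gammaAddLog t) z :=
  (laplaceConvergent_gammaAddLog hz).bdd_smul measurable_bernoulliKernel
    fun _ ↦ norm_bernoulliKernel_le_one

lemma one_sub_exp_neg_mul_bernoulliKernel {t : ℝ} (ht : t ≠ 0) :
    (1 - Complex.exp (-t)) * bernoulliKernel t =
      Complex.exp (-t) - (1 - Complex.exp (-t)) / t := by
  have ht' : (t : ℂ) ≠ 0 := Complex.ofReal_ne_zero.2 ht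
  have hexp : Complex.exp t - 1 ≠ 0 := by
    rw [sub_ne_zero, ← Complex.ofReal_exp]
    exact_mod_cast (Real.exp_eq_one_iff t).not.2 ht
  rw [bernoulliKernel, Complex.exp_neg]
  field_simp [Complex.exp_ne_zero]

lemma bernoulliLogIntegral_sub_add_one (hz : 0 < z.re) :
    bernoulliLogIntegral z - bernoulliLogIntegral (z + 1) =
      -(Complex.log (z + 1) / (z + 1)) +
        (Complex.log (z + 1) ^ 2 - Complex.log z ^ 2) / 2 := by
  have hz1 : 0 < (z + 1).re := by simpa using add_pos hz one_pos
  have hkernel : ∀ t ∈ Ioi (0 : ℝ),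
      Complex.exp (-z * t) • ((1 - Complex.exp (-t)) / t : ℂ) • gammaAddLog t =
        Complex.exp (-(z + 1) * t) • gammaAddLog t -
          (Complex.exp (-z * t) • bernoulliKernel t • gammaAddLog t -
            Complex.exp (-(z + 1) * t) • bernoulliKernel t • gammaAddLog t) := fun t ht ↦ by
    have hexp : Complex.exp (-(z + 1) * t) = Complex.exp (-z * t) * Complex.exp (-t) := by
      rw [← Complex.exp_add]
      ring_nf
    simp only [hexp, smul_eq_mul]
    linear_combination (Complex.exp (-z * t) * gammaAddLog t) *
      one_sub_exp_neg_mul_bernoulliKernel (ne_of_gt ht)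
  have hsplit : laplaceTransform (fun t ↦ ((1 - Complex.exp (-t)) / t : ℂ) • gammaAddLog t) z =
      laplaceTransform gammaAddLog (z + 1) -
        (bernoulliLogIntegral z - bernoulliLogIntegral (z + 1)) := by
    have hconv := laplaceConvergent_bernoulliKernel_smul_gammaAddLog hz
    have hconv1 := laplaceConvergent_bernoulliKernel_smul_gammaAddLog hz1
    rw [laplaceTransform, setIntegral_congr_fun measurableSet_Ioi hkernel,
      integral_sub (laplaceConvergent_gammaAddLog hz1) (hconv.fun_sub hconv1),
      integral_sub hconv hconv1]
    rfl
  rw [laplaceTransform_one_sub_exp_div_smul_gammaAddLog hz, laplaceTransform_gammaAddLog hz1]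
    at hsplit
  linear_combination hsplit

lemma sum_range_log_add_div_add (hz : 0 < z.re) (N : ℕ) :
    ∑ k ∈ Finset.range N, Complex.log (((k : ℂ) + 1) + z) / (((k : ℂ) + 1) + z) =
      (bernoulliLogIntegral (z + N) + Complex.log (z + N) ^ 2 / 2) -
        (bernoulliLogIntegral z + Complex.log z ^ 2 / 2) := by
  have hstep (k : ℕ) : Complex.log (((k : ℂ) + 1) + z) / (((k : ℂ) + 1) + z) =
      (bernoulliLogIntegral (z + (k + 1 : ℕ)) + Complex.log (z + (k + 1 : ℕ)) ^ 2 / 2) -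
        (bernoulliLogIntegral (z + k) + Complex.log (z + k) ^ 2 / 2) := by
    have hk : 0 < (z + k).re := by simpa using add_pos_of_pos_of_nonneg hz k.cast_nonneg
    have hshift : (k : ℂ) + 1 + z = z + k + 1 := by ring
    rw [hshift, Nat.cast_add_one, ← add_assoc]
    linear_combination bernoulliLogIntegral_sub_add_one hk
  rw [Finset.sum_congr rfl fun k _ ↦ hstep k, Finset.sum_range_sub
    fun k : ℕ ↦ bernoulliLogIntegral (z + k) + Complex.log (z + k) ^ 2 / 2]
  simp

lemma tendsto_sum_range_log_add_div_add_sub (hz : 0 < z.re) :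
    Tendsto (fun N : ℕ ↦
      ∑ k ∈ Finset.range N, Complex.log (((k : ℂ) + 1) + z) / (((k : ℂ) + 1) + z)
        - Complex.log (z + N) ^ 2 / 2)
      atTop (𝓝 (-(bernoulliLogIntegral z + Complex.log z ^ 2 / 2))) := by
  have hre : Tendsto (fun N : ℕ ↦ z + N) atTop (comap Complex.re atTop) := by
    rw [tendsto_comap_iff]
    simpa [Function.comp_def] using tendsto_atTop_add_const_left atTop z.re
      (tendsto_natCast_atTop_atTop (R := ℝ))
  have hzero : Tendsto (fun N : ℕ ↦ bernoulliLogIntegral (z + N)) atTop (𝓝 0) :=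
    (laplaceConvergent_bernoulliKernel_smul_gammaAddLog hz).tendsto_laplaceTransform_zero.comp hre
  have hlim := hzero.add_const (-(bernoulliLogIntegral z + Complex.log z ^ 2 / 2))
  rw [zero_add] at hlim
  refine hlim.congr fun N ↦ ?_
  rw [sum_range_log_add_div_add hz]
  ring

end BernoulliKernel

section StieltjesConstant

lemma ofReal_sum_Icc_log_div (N : ℕ) :
    ((∑ j ∈ Finset.Icc 1 N, Real.log j / j : ℝ) : ℂ) =
      ∑ k ∈ Finset.range N, Complex.log ((k : ℂ) + 1) / ((k : ℂ) + 1) := by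
  rw [← Finset.Ico_add_one_right_eq_Icc, Finset.sum_Ico_eq_sum_range]
  simp only [Complex.ofReal_sum, Complex.ofReal_div, Complex.natCast_log]
  simp [add_comm]

/- `gamma1` is a `limUnder`, so the limit has to be shown to exist: the telescoped sum at `z = 1`
is the sequence defining `gamma1`, with the index shifted by one. -/
lemma tendsto_gamma1 :
    Tendsto (fun n : ℕ ↦ ∑ j ∈ Finset.Icc 1 n, Real.log j / j - Real.log n ^ 2 / 2)
      atTop (𝓝 gamma1) := by
  have hlim := tendsto_sum_range_log_add_div_add_sub (z := 1) (by simp)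
  have hshift (N : ℕ) : (∑ k ∈ Finset.range N, Complex.log (((k : ℂ) + 1) + 1) / (((k : ℂ) + 1) + 1)
      - Complex.log (1 + N) ^ 2 / 2).re =
        ∑ j ∈ Finset.Icc 1 (N + 1), Real.log j / j - Real.log (N + 1 : ℕ) ^ 2 / 2 := by
    rw [← Complex.ofReal_re (_ - _), Complex.ofReal_sub, ofReal_sum_Icc_log_div,
      Finset.sum_range_succ', Complex.ofReal_div, Complex.ofReal_pow, Complex.natCast_log]
    simp [add_comm]
  exact tendsto_nhds_limUnder ⟨_, (tendsto_add_atTop_iff_nat 1).1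
    (((Complex.continuous_re.tendsto _).comp hlim).congr hshift)⟩

lemma hasSum_log_add_div_add_sub {z : ℂ} (hz : 0 < z.re) :
    HasSum (fun n : ℕ ↦ Complex.log (((n : ℂ) + 1) + z) / (((n : ℂ) + 1) + z) -
      Complex.log ((n : ℂ) + 1) / ((n : ℂ) + 1))
      (-(bernoulliLogIntegral z + Complex.log z ^ 2 / 2) - gamma1) := by
  have hgamma := (Complex.continuous_ofReal.tendsto _).comp tendsto_gamma1
  have hsq := ((tendsto_log_add_sq_sub_log_sq z).comp
    tendsto_natCast_atTop_atTop).div_const 2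
  have hlim := ((tendsto_sum_range_log_add_div_add_sub hz).sub hgamma).add hsq
  rw [zero_div, add_zero] at hlim
  refine (summable_log_add_div_add_sub z).hasSum_iff_tendsto_nat.2 (hlim.congr fun N ↦ ?_)
  simp only [Function.comp_apply, Complex.ofReal_sub, ofReal_sum_Icc_log_div,
    Finset.sum_sub_distrib]
  push_cast
  ring

end StieltjesConstant

theorem stmt12 (z : ℂ) (hz : 0 < z.re) :
    psi1 z - (1/2) * (Complex.log z) ^ 2 =
      -Complex.log z / z
      + ∫ t in Set.Ioi (0:ℝ), (1 / (Complex.exp (t : ℂ) - 1) - 1 / (t : ℂ))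
          * Complex.exp (-z * (t : ℂ)) * ((eulerGamma : ℂ) + (Real.log t : ℂ)) := by
  have hintegral : ∫ t in Ioi (0 : ℝ), (1 / (Complex.exp t - 1) - 1 / t) * Complex.exp (-z * t) *
      (eulerGamma + Real.log t) = bernoulliLogIntegral z := by
    simp only [bernoulliLogIntegral, laplaceTransform, bernoulliKernel, gammaAddLog, smul_eq_mul,
      mul_left_comm, mul_assoc]
  rw [psi1, (hasSum_log_add_div_add_sub hz).tsum_eq, hintegral]
  ring
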